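/- Let G and H be graphs of the same order n ≥ 1. Then H ⪯ G if and only if H* ⪯ G*, and H ≺ G if and only if H* ≺ G*. -/

import Mathlib

/-! The substitution `φ y = y / (1 - y)` is increasing from `(-∞, 0]` onto `(-1, 0]`. An independent
set of `G*` is an independent set `s` of `G` together with any set of pendant vertices over the
complement of `s`, so `I(G*, φ y) = I(G, y) / (1 - y) ^ n`. Hence `ξ(G*) = φ (ξ(G))`, the interval
`[ξ(G*), 0]` is the image of `[ξ(G), 0]`, and the positive factor `(1 - y) ^ n` is the same for `G`
and `H`; strictness compares polynomials on an infinite set.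

This needs `I(G, ·)` to have a real root. The minimum over all `S ⊆ V` of `I(G[S], ·)` is
continuous, positive at `0` and nonpositive at `-1` (a single vertex), so it vanishes at some
`m ∈ [-1, 0]`. All `I(G[S], m)` are then nonnegative, so by the deletion recurrence
`I(G[S ∪ {v}], m) = I(G[S], m) + m * I(G[S \ N(v)], m)` they decrease as `S` grows, and the minimum
`0` is attained at `S = V`. -/

open Polynomial SimpleGraph

/-- A finset of vertices is independent: pairwise nonadjacent. -/
def IsIndepFinset {V : Type*} (G : SimpleGraph V) (s : Finset V) : Prop :=
  ∀ u ∈ s, ∀ v ∈ s, ¬ G.Adj u v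

open Classical in
/-- The independence polynomial of a finite graph, with real coefficients. -/
noncomputable def indepPoly {V : Type*} [Fintype V] (G : SimpleGraph V) : Polynomial ℝ :=
  ∑ s : Finset V, if IsIndepFinset G s then (X : Polynomial ℝ) ^ s.card else 0

/-- `xi G` : the largest real root of the independence polynomial of `G`. -/
noncomputable def xi {V : Type*} [Fintype V] (G : SimpleGraph V) : ℝ :=
  sSup {x : ℝ | (indepPoly G).eval x = 0}

/-- `Pre H G` (`H ⪯ G`) : `I(H,x) ≥ I(G,x)` for all `x ∈ [ξ(G), 0]`. -/
def Pre {V W : Type*} [Fintype V] [Fintype W] (H : SimpleGraph W) (G : SimpleGraph V) : Prop :=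
  ∀ x ∈ Set.Icc (xi G) 0, (indepPoly G).eval x ≤ (indepPoly H).eval x

/-- `SPre H G` (`H ≺ G`). -/
def SPre {V W : Type*} [Fintype V] [Fintype W] (H : SimpleGraph W) (G : SimpleGraph V) : Prop :=
  Pre H G ∧ indepPoly H ≠ indepPoly G

open Classical in
/-- A graph is well-covered if all maximal independent sets have the same size. -/
def WellCovered {V : Type*} (G : SimpleGraph V) : Prop :=
  ∀ s t : Finset V,
    IsIndepFinset G s → (∀ v ∉ s, ¬ IsIndepFinset G (insert v s)) →
    IsIndepFinset G t → (∀ v ∉ t, ¬ IsIndepFinset G (insert v t)) →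
    s.card = t.card

/-- A connected unicyclic graph: connected with as many edges as vertices. -/
def Unicyclic {V : Type*} [Fintype V] (G : SimpleGraph V) : Prop :=
  G.Connected ∧ G.edgeSet.ncard = Fintype.card V

/-- The graph star (corona with `K₁`) of `G`: each vertex `inl v` gets a pendant
vertex `inr v`. -/
def corona {V : Type*} (G : SimpleGraph V) : SimpleGraph (V ⊕ V) :=
  SimpleGraph.fromRel (fun a b =>
    match a, b with
    | Sum.inl u, Sum.inl v => G.Adj u v
    | Sum.inl u, Sum.inr v => u = v
    | _, _ => False)

/-- `Ugraph n` (`U_n`, `n ≥ 3`): a triangle `0,1,2` with `n - 3` pendant vertices attached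
to vertex `0`. -/
def Ugraph (n : ℕ) : SimpleGraph (Fin n) :=
  SimpleGraph.fromRel (fun i j => i.val = 0 ∨ (i.val = 1 ∧ j.val = 2))

/-- `Dgraph n` (`D_n`, `n ≥ 4`): a path `0,1,...,n-1` plus the chord `{0,2}`, i.e. a
triangle with a path on `n - 3` vertices attached. -/
def Dgraph (n : ℕ) : SimpleGraph (Fin n) :=
  SimpleGraph.fromRel (fun i j => j.val = i.val + 1 ∨ (i.val = 0 ∧ j.val = 2))

/-- `starGraph n` (`S_n = K_{1,n-1}`): vertex `0` adjacent to all other vertices. -/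
def starGraph (n : ℕ) : SimpleGraph (Fin n) :=
  SimpleGraph.fromRel (fun i _ => i.val = 0)

/-- `Mgraph n` (`M_n`, odd `n ≥ 5`): a triangle `0,1,2` with `(n-3)/2` paths of length two
attached at vertex `0`; the middle vertices are the odd indices `3,5,...,n-2` and the leaf
attached to middle vertex `i` is `i + 1`. -/
def Mgraph (n : ℕ) : SimpleGraph (Fin n) :=
  SimpleGraph.fromRel (fun i j =>
    (i.val = 0 ∧ (j.val ≤ 2 ∨ j.val % 2 = 1)) ∨ (i.val = 1 ∧ j.val = 2) ∨
    (i.val % 2 = 1 ∧ 3 ≤ i.val ∧ j.val = i.val + 1))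

/-- `SPgraph g k ℓ` (`G(g,k,ℓ)`, for `g ∈ {3,5}` and `k + ℓ ≥ 1`): a cycle on the vertices
`0,...,g-1`, a copy of `P_k*` on the vertices `g,...,g+2k-1` (path vertices at even offsets,
each followed by its pendant vertex) joined to the cycle vertex `0` by an edge to the
path end `g`, and a copy of `P_ℓ*` on the vertices `g+2k,...,g+2k+2ℓ-1` joined to the cycle
vertex `2` by an edge to the path end `g+2k`. -/
def SPgraph (g k ℓ : ℕ) : SimpleGraph (Fin (g + 2*k + 2*ℓ)) :=
  SimpleGraph.fromRel (fun i j =>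
    (i.val < g ∧ j.val < g ∧ (j.val = i.val + 1 ∨ (i.val = 0 ∧ j.val = g - 1))) ∨
    (i.val = 0 ∧ 0 < k ∧ j.val = g) ∨
    (g ≤ i.val ∧ i.val < g + 2*k ∧ (i.val - g) % 2 = 0 ∧
      (j.val = i.val + 1 ∨ (j.val = i.val + 2 ∧ j.val < g + 2*k))) ∨
    (i.val = 2 ∧ 0 < ℓ ∧ j.val = g + 2*k) ∨
    (g + 2*k ≤ i.val ∧ (i.val - (g + 2*k)) % 2 = 0 ∧
      (j.val = i.val + 1 ∨ j.val = i.val + 2)))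

/-- `Gtree n` (`G_{2n}`, `n ≥ 5`): the tree on `2n` vertices with path `v_1 … v_n` at
indices `0,…,n-1`, `z_1` at index `n`, `y_1, y_2` at `n+1, n+2`, `x_1, x_2` at `n+3, n+4`
(with `v_3 z_1`, `v_3 y_1`, `y_1 y_2`, `v_5 x_1`, `x_1 x_2` edges), and pendant vertices
`w_j` at index `n + j - 1` attached to `v_j` for `6 ≤ j ≤ n`. -/
def Gtree (n : ℕ) : SimpleGraph (Fin (2*n)) :=
  SimpleGraph.fromRel (fun a b =>
    (a.val + 1 = b.val ∧ b.val < n) ∨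
    (a.val = 2 ∧ (b.val = n ∨ b.val = n + 1)) ∨
    (a.val = n + 1 ∧ b.val = n + 2) ∨
    (a.val = 4 ∧ b.val = n + 3) ∨
    (a.val = n + 3 ∧ b.val = n + 4) ∨
    (5 ≤ a.val ∧ a.val < n ∧ b.val = n + a.val))

open Finset

theorem exists_mem_Icc_forall_le_exists_eq {ι α β : Type*} [Finite ι]
    [ConditionallyCompleteLinearOrder α] [TopologicalSpace α] [OrderTopology α] [DenselyOrdered α]
    [LinearOrder β] [TopologicalSpace β] [OrderClosedTopology β]
    {f : ι → α → β} {a b : α} {c : β} (hab : a ≤ b)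
    (hf : ∀ i, ContinuousOn (f i) (Set.Icc a b)) (ha : ∃ i, f i a ≤ c) (hb : ∀ i, c ≤ f i b) :
    ∃ m ∈ Set.Icc a b, (∀ i, c ≤ f i m) ∧ ∃ i, f i m = c := by
  obtain ⟨_⟩ := nonempty_fintype ι
  obtain ⟨i₀, hi₀⟩ := ha
  have huniv : (univ : Finset ι).Nonempty := ⟨i₀, mem_univ i₀⟩
  have hcont : ContinuousOn (fun x ↦ univ.inf' huniv fun i ↦ f i x) (Set.Icc a b) :=
    ContinuousOn.finset_inf'_apply huniv fun i _ ↦ hf i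
  obtain ⟨m, hm, hinf⟩ := intermediate_value_Icc hab hcont
    ⟨inf'_le_of_le _ (mem_univ i₀) hi₀, le_inf' _ _ fun i _ ↦ hb i⟩
  obtain ⟨i, -, hi⟩ := exists_mem_eq_inf' huniv fun i ↦ f i m
  exact ⟨m, hm, fun j ↦ hinf.ge.trans (inf'_le _ (mem_univ j)), i, hi.symm.trans hinf⟩

theorem polynomial_eq_iff_forall_eval_eq {R : Type*} [CommRing R] [IsDomain R] {s : Set R}
    (hs : s.Infinite) {p q : R[X]} : p = q ↔ ∀ x ∈ s, p.eval x = q.eval x :=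
  ⟨fun h _ _ ↦ h ▸ rfl, fun h ↦ eq_of_infinite_eval_eq p q (hs.mono h)⟩

section IndepPolyOn

variable {V : Type*} (G : SimpleGraph V)

theorem isIndepFinset_empty : IsIndepFinset G ∅ := by
  simp [IsIndepFinset]

theorem isIndepFinset_insert [DecidableEq V] {v : V} {s : Finset V} :
    IsIndepFinset G (insert v s) ↔ IsIndepFinset G s ∧ ∀ u ∈ s, ¬ G.Adj v u := by
  simp only [IsIndepFinset, mem_insert, forall_eq_or_imp, G.irrefl, not_false_eq_true, true_and,
    G.adj_comm _ v]
  grind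

open Classical in
/-- The independence polynomial of the subgraph of `G` induced on `S`. It is a sum over subsets of
`S` in the ambient vertex type, which makes the polynomials of different `S` easy to compare. -/
noncomputable def indepPolyOn (S : Finset V) : ℝ[X] :=
  ∑ T ∈ S.powerset with IsIndepFinset G T, X ^ #T

theorem indepPolyOn_univ [Fintype V] : indepPolyOn G univ = indepPoly G := by
  rw [indepPolyOn, indepPoly, powerset_univ, sum_filter]

theorem indepPolyOn_empty : indepPolyOn G ∅ = 1 := by
  simp [indepPolyOn, sum_filter, isIndepFinset_empty]

open Classical in
theorem indepPolyOn_insert {S : Finset V} {v : V} (hv : v ∉ S) :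
    indepPolyOn G (insert v S) = indepPolyOn G S + X * indepPolyOn G {u ∈ S | ¬ G.Adj v u} := by
  have hlink : ({T ∈ S.powerset | IsIndepFinset G (insert v T)} : Finset (Finset V)) =
      {T ∈ powerset {u ∈ S | ¬ G.Adj v u} | IsIndepFinset G T} := by
    ext T
    simp only [mem_filter, mem_powerset, isIndepFinset_insert, subset_iff]
    grind
  have hcard : ∀ T ∈ S.powerset, #(insert v T) = #T + 1 := fun T hT ↦
    card_insert_of_notMem fun hvT ↦ hv (mem_powerset.1 hT hvT)
  simp only [indepPolyOn, mul_sum, ← hlink, ← pow_succ']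
  simp only [sum_filter, sum_powerset_insert hv]
  congr 1
  exact sum_congr rfl fun T hT ↦ by rw [hcard T hT]

theorem eval_indepPolyOn_pos (S : Finset V) {x : ℝ} (hx : 0 ≤ x) :
    0 < (indepPolyOn G S).eval x := by
  classical
  simp only [indepPolyOn, eval_finsetSum, eval_pow, eval_X]
  exact sum_pos' (fun T _ ↦ by positivity) ⟨∅, by simp [isIndepFinset_empty]⟩

theorem antitone_eval_indepPolyOn {x : ℝ} (hx : x ≤ 0)
    (hnonneg : ∀ S, 0 ≤ (indepPolyOn G S).eval x) :
    Antitone fun S ↦ (indepPolyOn G S).eval x := by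
  classical
  refine antitone_iff_forall_insert_le.2 fun S v hv ↦ ?_
  simp only [indepPolyOn_insert G hv, eval_add, eval_mul, eval_X]
  exact add_le_of_nonpos_right (mul_nonpos_of_nonpos_of_nonneg hx (hnonneg _))

end IndepPolyOn

section Xi

variable {V : Type*} [Fintype V] (G : SimpleGraph V)

theorem eval_indepPoly_pos {x : ℝ} (hx : 0 ≤ x) : 0 < (indepPoly G).eval x :=
  indepPolyOn_univ G ▸ eval_indepPolyOn_pos G univ hx

theorem exists_eval_indepPoly_eq_zero [Nonempty V] : ∃ x, (indepPoly G).eval x = 0 := by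
  obtain ⟨v⟩ := ‹Nonempty V›
  have hsingleton : (indepPolyOn G {v}).eval (-1) ≤ 0 := by
    classical
    rw [← insert_empty_eq, indepPolyOn_insert G (notMem_empty v)]
    simp [indepPolyOn_empty]
  obtain ⟨m, ⟨-, hm⟩, hnonneg, S, hS⟩ :=
    exists_mem_Icc_forall_le_exists_eq (f := fun S x ↦ (indepPolyOn G S).eval x) (by norm_num)
      (fun S ↦ (indepPolyOn G S).continuous.continuousOn) ⟨{v}, hsingleton⟩
      fun S ↦ (eval_indepPolyOn_pos G S le_rfl).le
  refine ⟨m, ?_⟩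
  rw [← indepPolyOn_univ]
  have hle := antitone_eval_indepPolyOn G hm hnonneg (subset_univ S)
  exact (hle.trans_eq hS).antisymm (hnonneg univ)

theorem isGreatest_xi [Nonempty V] : IsGreatest {x | (indepPoly G).eval x = 0} (xi G) := by
  have hne : indepPoly G ≠ 0 := fun h ↦ by simpa [h] using eval_indepPoly_pos G le_rfl
  have hfin : {x | (indepPoly G).eval x = 0}.Finite := finite_setOfPred_isRoot hne
  exact ⟨Set.Nonempty.csSup_mem (exists_eval_indepPoly_eq_zero G) hfin,
    fun x hx ↦ le_csSup hfin.bddAbove hx⟩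

theorem neg_of_eval_indepPoly_eq_zero {x : ℝ} (hx : (indepPoly G).eval x = 0) : x < 0 :=
  lt_of_not_ge fun h ↦ (eval_indepPoly_pos G h).ne' hx

theorem xi_neg [Nonempty V] : xi G < 0 :=
  neg_of_eval_indepPoly_eq_zero G (isGreatest_xi G).1

end Xi

section CoronaSubst

/-- The Möbius substitution relating the independence polynomial of the graph star `G*` to that of
`G`. Only its values on `(-∞, 1)` matter; at `1` it takes the junk value `0`. -/
noncomputable def coronaSubst (y : ℝ) : ℝ := y / (1 - y)

theorem coronaSubst_zero : coronaSubst 0 = 0 := by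
  simp [coronaSubst]

theorem one_add_coronaSubst {y : ℝ} (hy : y ≠ 1) : 1 + coronaSubst y = (1 - y)⁻¹ := by
  have : 1 - y ≠ 0 := sub_ne_zero.2 hy.symm
  rw [coronaSubst]
  field_simp
  ring

theorem strictMonoOn_coronaSubst : StrictMonoOn coronaSubst (Set.Iio 1) := by
  intro x hx y hy hxy
  rw [Set.mem_Iio, ← sub_pos] at hx hy
  rw [coronaSubst, coronaSubst, div_lt_div_iff₀ hx hy]
  linarith

theorem continuousOn_coronaSubst : ContinuousOn coronaSubst (Set.Iio 1) :=
  continuousOn_id.div (by fun_prop) fun _ hy ↦ (sub_pos.2 hy).ne'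

theorem image_coronaSubst_Icc {a b : ℝ} (hab : a ≤ b) (hb : b < 1) :
    coronaSubst '' Set.Icc a b = Set.Icc (coronaSubst a) (coronaSubst b) :=
  have hsub : Set.Icc a b ⊆ Set.Iio 1 := fun _ hy ↦ hy.2.trans_lt hb
  (continuousOn_coronaSubst.mono hsub).image_Icc_of_monotoneOn hab
    (strictMonoOn_coronaSubst.monotoneOn.mono hsub)

end CoronaSubst

section Corona

variable {V : Type*} (G : SimpleGraph V)

theorem corona_adj_inl_inl {u v : V} : (corona G).Adj (.inl u) (.inl v) ↔ G.Adj u v := by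
  simpa [corona, G.adj_comm v u] using G.ne_of_adj

theorem corona_adj_inl_inr {u v : V} : (corona G).Adj (.inl u) (.inr v) ↔ u = v := by
  simp [corona]

theorem not_corona_adj_inr_inr {u v : V} : ¬ (corona G).Adj (.inr u) (.inr v) := by
  simp [corona]

theorem isIndepFinset_corona_disjSum {s t : Finset V} :
    IsIndepFinset (corona G) (s.disjSum t) ↔ IsIndepFinset G s ∧ Disjoint s t := by
  simp only [IsIndepFinset, Sum.forall, inl_mem_disjSum, inr_mem_disjSum, corona_adj_inl_inl,
    corona_adj_inl_inr, (corona G).adj_comm (.inr _) (.inl _), not_corona_adj_inr_inr,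
    Finset.disjoint_left]
  grind

variable [Fintype V]

open Classical in
theorem indepPoly_corona :
    indepPoly (corona G) = ∑ s with IsIndepFinset G s, X ^ #s * (X + 1) ^ #sᶜ := by
  have hpendant (s : Finset V) : ({t | Disjoint s t} : Finset (Finset V)) = sᶜ.powerset := by
    ext t
    simp [subset_compl_iff_disjoint_left]
  rw [indepPoly, ← sumEquiv.symm.toEquiv.sum_comp, Fintype.sum_prod_type, sum_filter]
  refine sum_congr rfl fun s _ ↦ ?_
  simp only [OrderIso.coe_toEquiv, sumEquiv_symm_apply, isIndepFinset_corona_disjSum, card_disjSum]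
  split_ifs with hs
  · simp only [hs, true_and, pow_add, ← sum_filter, hpendant, ← mul_sum]
    simp [← sum_pow_mul_eq_add_pow]
  · simp [hs]

theorem eval_indepPoly_corona {y : ℝ} (hy : y ≠ 1) :
    (indepPoly (corona G)).eval (coronaSubst y) =
      (indepPoly G).eval y / (1 - y) ^ Fintype.card V := by
  classical
  rw [indepPoly_corona, indepPoly, ← sum_filter]
  simp only [eval_finsetSum, sum_div, eval_mul, eval_pow, eval_add, eval_X, eval_one,
    add_comm (coronaSubst y), one_add_coronaSubst hy]
  refine sum_congr rfl fun s _ ↦ ?_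
  rw [coronaSubst, div_eq_mul_inv, mul_pow, mul_assoc, ← pow_add, card_add_card_compl, inv_pow,
    div_eq_mul_inv]

theorem xi_corona [Nonempty V] : xi (corona G) = coronaSubst (xi G) := by
  have hroot {y : ℝ} (hy : y < 1) :
      (indepPoly (corona G)).eval (coronaSubst y) = 0 ↔ (indepPoly G).eval y = 0 := by
    simp [eval_indepPoly_corona G hy.ne, (sub_pos.2 hy).ne']
  have hxi : xi G < 1 := (xi_neg G).trans one_pos
  refine (isGreatest_xi (corona G)).unique ⟨(hroot hxi).2 (isGreatest_xi G).1, fun x hx ↦ ?_⟩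
  by_contra! hlt
  obtain ⟨y, hy, rfl⟩ : x ∈ coronaSubst '' Set.Icc (xi G) 0 := by
    rw [image_coronaSubst_Icc (xi_neg G).le one_pos, coronaSubst_zero]
    exact ⟨hlt.le, (neg_of_eval_indepPoly_eq_zero _ hx).le⟩
  have hy1 : y < 1 := hy.2.trans_lt one_pos
  exact hlt.not_ge
    (strictMonoOn_coronaSubst.monotoneOn hy1 hxi ((isGreatest_xi G).2 ((hroot hy1).1 hx)))

end Corona

section Comparison

variable {V W : Type*} [Fintype V] [Fintype W] (G : SimpleGraph V) (H : SimpleGraph W)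

theorem pre_corona_iff [Nonempty V] (hcard : Fintype.card W = Fintype.card V) :
    Pre (corona H) (corona G) ↔ Pre H G := by
  rw [Pre, xi_corona, ← coronaSubst_zero, ← image_coronaSubst_Icc (xi_neg G).le one_pos,
    Set.forall_mem_image]
  refine forall₂_congr fun y hy ↦ ?_
  have hy1 : y < 1 := hy.2.trans_lt one_pos
  rw [eval_indepPoly_corona G hy1.ne, eval_indepPoly_corona H hy1.ne, hcard,
    div_le_div_iff_of_pos_right (pow_pos (sub_pos.2 hy1) _)]

theorem indepPoly_corona_eq_iff (hcard : Fintype.card W = Fintype.card V) :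
    indepPoly (corona H) = indepPoly (corona G) ↔ indepPoly H = indepPoly G := by
  have hinf : (Set.Iio (1 : ℝ)).Infinite := Set.Iio_infinite 1
  rw [polynomial_eq_iff_forall_eval_eq (hinf.image strictMonoOn_coronaSubst.injOn),
    polynomial_eq_iff_forall_eval_eq hinf, Set.forall_mem_image]
  refine forall₂_congr fun y (hy : y < 1) ↦ ?_
  rw [eval_indepPoly_corona G hy.ne, eval_indepPoly_corona H hy.ne, hcard,
    div_left_inj' (pow_pos (sub_pos.2 hy) _).ne']

end Comparison

/-- For graphs `G`, `H` of the same order `n ≥ 1`, `H ⪯ G` iff `H* ⪯ G*`,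
and `H ≺ G` iff `H* ≺ G*`. -/
theorem stmt4 {V W : Type*} [Fintype V] [Fintype W] (n : ℕ) (hn : 1 ≤ n)
    (G : SimpleGraph V) (H : SimpleGraph W)
    (hV : Fintype.card V = n) (hW : Fintype.card W = n) :
    (Pre H G ↔ Pre (corona H) (corona G)) ∧ (SPre H G ↔ SPre (corona H) (corona G)) := by
  have hcard : Fintype.card W = Fintype.card V := hW.trans hV.symm
  have : Nonempty V := Fintype.card_pos_iff.1 (hn.trans_eq hV.symm)
  have hpre := pre_corona_iff G H hcard
  have heq := indepPoly_corona_eq_iff G H hcard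
  exact ⟨hpre.symm, (and_congr hpre (not_congr heq)).symm⟩
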